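/- Suppose k_min > 0 and ∫₀^{Φ_F} 1/K(φ) dφ > 1, so that a unique steady state (Q*, N*) of the Q-system exists. Let Q_init satisfy Assumption (A2) with Q_init ≠ Q*, and let τ* be the maximal existence time of the classical solution of the Q-system with initial datum Q_init. Then τ* ≤ (1/k_min) · ln( 2Φ_F / ‖Q_init' − (Q*)'‖_{L¹(0,1)} ) < ∞. -/

import Mathlib

open Real Set MeasureTheory Filter Topology
open scoped ENNReal

noncomputable section

/-- The time interval `[0, T)` in `ℝ`, where `T : ℝ≥0∞` may be `∞`. -/
def Ico0 (T : ℝ≥0∞) : Set ℝ := {τ : ℝ | 0 ≤ τ ∧ ENNReal.ofReal τ < T}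

/-- Partial derivative in the time variable (one-sided at `τ = 0`). -/
def pdTau (Q : ℝ → ℝ → ℝ) (τ η : ℝ) : ℝ := derivWithin (fun s => Q s η) (Ici 0) τ

/-- Partial derivative in the spatial variable (one-sided at `η = 0` and `η = 1`). -/
def pdEta (Q : ℝ → ℝ → ℝ) (τ η : ℝ) : ℝ := derivWithin (fun x => Q τ x) (Icc 0 1) η

/-- Assumption 1.1: `K ∈ C²(ℝ)` with `K'`, `K''` bounded on `ℝ` and `K > 0` on `[0, Φ_F]`. -/
structure KAssump (K : ℝ → ℝ) (ΦF : ℝ) : Prop where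
  smooth : ContDiff ℝ 2 K
  bdd1 : ∃ C : ℝ, ∀ x : ℝ, |deriv K x| ≤ C
  bdd2 : ∃ C : ℝ, ∀ x : ℝ, |deriv (deriv K) x| ≤ C
  pos : ∀ φ ∈ Icc (0 : ℝ) ΦF, 0 < K φ

/-- `k_min := K'(0) + ∫₀^{Φ_F} min(K''(φ), 0) dφ`. -/
def kmin (K : ℝ → ℝ) (ΦF : ℝ) : ℝ :=
  deriv K 0 + ∫ φ in (0 : ℝ)..ΦF, min (deriv (deriv K) φ) 0

/-- `k_max := K'(0) + ∫₀^{Φ_F} max(K''(φ), 0) dφ`. -/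
def kmax (K : ℝ → ℝ) (ΦF : ℝ) : ℝ :=
  deriv K 0 + ∫ φ in (0 : ℝ)..ΦF, max (deriv (deriv K) φ) 0

/-- Assumption (A2) on the initial datum. -/
structure A2 (K : ℝ → ℝ) (ΦF : ℝ) (Qinit : ℝ → ℝ) : Prop where
  reg : ContDiffOn ℝ 1 Qinit (Icc 0 1)
  mono : MonotoneOn Qinit (Icc 0 1)
  init0 : Qinit 0 = 0
  init1 : Qinit 1 = ΦF
  deriv1 : K ΦF < derivWithin Qinit (Icc 0 1) 1
  compat : derivWithin Qinit (Icc 0 1) 1 - derivWithin Qinit (Icc 0 1) 0 = K ΦF - K 0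

/-- A classical solution `(Q, N)` of the Q-system on `[0, T)` with initial datum `Qinit`. -/
structure IsQSol (K : ℝ → ℝ) (ΦF : ℝ) (T : ℝ≥0∞) (Qinit : ℝ → ℝ)
    (Q : ℝ → ℝ → ℝ) (N : ℝ → ℝ) : Prop where
  initReg : ContDiffOn ℝ 1 Qinit (Icc 0 1)
  initMono : MonotoneOn Qinit (Icc 0 1)
  init0 : Qinit 0 = 0
  init1 : Qinit 1 = ΦF
  initDeriv : K ΦF < derivWithin Qinit (Icc 0 1) 1
  reg : ContDiffOn ℝ 1 (Function.uncurry Q) (Ico0 T ×ˢ Icc (0 : ℝ) 1)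
  mono : ∀ τ ∈ Ico0 T, MonotoneOn (Q τ) (Icc 0 1)
  Ncont : ContinuousOn N (Ico0 T)
  Npos : ∀ τ ∈ Ico0 T, 0 < N τ
  pde : ∀ τ ∈ Ico0 T, ∀ η ∈ Ioo (0 : ℝ) 1,
    pdTau Q τ η + pdEta Q τ η = 1 / N τ + K (Q τ η)
  bc : ∀ τ ∈ Ico0 T, Q τ 0 = 0
  Ndef : ∀ τ ∈ Ico0 T, 1 / N τ = pdEta Q τ 1 - K ΦF
  init : ∀ η ∈ Icc (0 : ℝ) 1, Q 0 η = Qinit η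
  constraint : ∀ τ ∈ Ico0 T, K ΦF < pdEta Q τ 1

/-- A classical solution `(Q, Ñ)` of the relaxed system on `[0, T)` with initial datum `Qinit`,
where `Ñ` is unconstrained in sign. -/
structure IsRelaxedSol (K : ℝ → ℝ) (ΦF : ℝ) (T : ℝ≥0∞) (Qinit : ℝ → ℝ)
    (Q : ℝ → ℝ → ℝ) (Ntil : ℝ → ℝ) : Prop where
  initReg : ContDiffOn ℝ 1 Qinit (Icc 0 1)
  init0 : Qinit 0 = 0
  init1 : Qinit 1 = ΦF
  reg : ContDiffOn ℝ 1 (Function.uncurry Q) (Ico0 T ×ˢ Icc (0 : ℝ) 1)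
  Ncont : ContinuousOn Ntil (Ico0 T)
  pde : ∀ τ ∈ Ico0 T, ∀ η ∈ Ioo (0 : ℝ) 1,
    pdTau Q τ η + pdEta Q τ η = Ntil τ + K (Q τ η)
  bc : ∀ τ ∈ Ico0 T, Q τ 0 = 0
  Ndef : ∀ τ ∈ Ico0 T, Ntil τ = pdEta Q τ 1 - K ΦF
  init : ∀ η ∈ Icc (0 : ℝ) 1, Q 0 η = Qinit η

/-- A steady state `(Q*, N*)` of the Q-system. -/
def IsSteadyState (K : ℝ → ℝ) (ΦF : ℝ) (Qs : ℝ → ℝ) (Ns : ℝ) : Prop :=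
  ContDiffOn ℝ 1 Qs (Icc 0 1) ∧ 0 < Ns ∧
    (∀ η ∈ Icc (0 : ℝ) 1, derivWithin Qs (Icc 0 1) η = K (Qs η) + 1 / Ns) ∧
    Qs 0 = 0 ∧ Qs 1 = ΦF

/-- `P₀ f := f - ∫₀¹ f`. -/
def P0 (f : ℝ → ℝ) (η : ℝ) : ℝ := f η - ∫ x in (0 : ℝ)..1, f x

/-- `H_init := Q_init' - K ∘ Q_init` (derivative within `[0,1]`). -/
def Hinit (K : ℝ → ℝ) (Qinit : ℝ → ℝ) (η : ℝ) : ℝ :=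
  derivWithin Qinit (Icc 0 1) η - K (Qinit η)

/-!
For two solutions, `p = ∂_η Q₁ - ∂_η Q₂` is transported along characteristics with source
`K'(Q₁) ∂_η Q₁ - K'(Q₂) ∂_η Q₂`, and it is periodic in `η` because
`∂_η Q(τ, 0) - K(0) = 1/N(τ) = ∂_η Q(τ, 1) - K(Φ_F)` for each solution. Split
`K' = k_min + a + b` on `[0, Φ_F]` with `a ≥ 0` nonincreasing and `b ≥ 0` nondecreasing. Pointwise,
`sign p * (source)` is at least `k_min * |p|` plus `sign (Q₁ - Q₂) * (Θ ∘ Q₁ - Θ ∘ Q₂)'`, where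
`Θ' = a - b`. The last term is the derivative of `Θ (max Q₁ Q₂) - Θ (min Q₁ Q₂)`, which vanishes at
both ends of `[0, 1]`, so `‖p‖_{L¹}` grows at least like `exp (k_min τ)`. But slopes of
nondecreasing profiles from `0` to `Φ_F` are never more than `2 Φ_F` apart in `L¹`, and the steady
state is a solution to compare with at all times.
-/

section Calculus

theorem continuousOn_intervalIntegral_of_continuousOn {X : Type*} [TopologicalSpace X]
    [FirstCountableTopology X] {s : Set X} [LocallyCompactSpace s] {f : X → ℝ → ℝ} {a b : ℝ}
    (hab : a ≤ b) (hf : ContinuousOn (Function.uncurry f) (s ×ˢ Icc a b)) :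
    ContinuousOn (fun x => ∫ y in a..b, f x y) s := by
  rw [continuousOn_iff_continuous_domRestrict]
  have hextend : Continuous (Function.uncurry fun (x : s) y => f x (projIcc a b hab y)) :=
    hf.comp_continuous (f := fun z : s × ℝ => ((z.1 : X), (projIcc a b hab z.2 : ℝ)))
      (by fun_prop) fun z => ⟨z.1.2, (projIcc a b hab z.2).2⟩
  refine (intervalIntegral.continuous_parametric_intervalIntegral_of_continuous' (μ := volume)
    hextend a b).congr fun x => intervalIntegral.integral_congr fun y hy => ?_
  rw [uIcc_of_le hab] at hy
  simp only [projIcc_of_mem hab hy]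

theorem sub_le_integral_of_liminf_slope_right_le {f φ : ℝ → ℝ} {a b : ℝ} (hab : a ≤ b)
    (hf : ContinuousOn f (Icc a b)) (hφ : ContinuousOn φ (Icc a b))
    (hslope : ∀ x ∈ Ico a b, ∀ r, φ x < r → ∃ᶠ z in 𝓝[>] x, slope f x z < r) :
    f b - f a ≤ ∫ x in a..b, φ x := by
  have hprimitive : ∀ x ∈ Ico a b,
      HasDerivWithinAt (fun y => f a + ∫ z in a..y, φ z) (φ x) (Ici x) x := fun x hx => by
    have hright : Icc a b ∈ 𝓝[>] x := Icc_mem_nhdsGT_of_mem hx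
    refine (intervalIntegral.integral_hasDerivWithinAt_right ?_ ?_ ?_).const_add _
    · exact (hφ.mono (Icc_subset_Icc_right hx.2.le)).intervalIntegrable_of_Icc hx.1
    · exact ⟨_, hright, hφ.aestronglyMeasurable measurableSet_Icc⟩
    · exact (hφ x (Ico_subset_Icc_self hx)).mono_of_mem_nhdsWithin hright
  have hint : IntervalIntegrable φ volume a b := hφ.intervalIntegrable_of_Icc hab
  have hcont : ContinuousOn (fun y => f a + ∫ z in a..y, φ z) (Icc a b) := by
    rw [← uIcc_of_le hab]
    exact continuousOn_const.add
      (intervalIntegral.continuousOn_primitive_interval' hint left_mem_uIcc)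
  have hle := image_le_of_liminf_slope_right_le_deriv_boundary hf (by simp) hcont hprimitive hslope
    (right_mem_Icc.2 hab)
  linarith

theorem abs_mixed_difference_sub_le {S X : Set ℝ} (hS : Convex ℝ S) (hX : Convex ℝ X)
    {u f w : ℝ → ℝ → ℝ} {w₀ C : ℝ}
    (hu : ∀ x ∈ X, ∀ s ∈ S, HasDerivWithinAt (fun s => u s x) (f s x) S s)
    (hf : ∀ s ∈ S, ∀ x ∈ X, HasDerivWithinAt (f s) (w s x) X x)
    (hw : ∀ s ∈ S, ∀ x ∈ X, |w s x - w₀| ≤ C) {s₀ s : ℝ} (hs₀ : s₀ ∈ S) (hs : s ∈ S)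
    {x₀ x : ℝ} (hx₀ : x₀ ∈ X) (hx : x ∈ X) :
    |u s x - u s₀ x - (u s x₀ - u s₀ x₀) - w₀ * (s - s₀) * (x - x₀)| ≤
      C * |x - x₀| * |s - s₀| := by
  have hf_le : ∀ r ∈ S, |f r x - f r x₀ - w₀ * (x - x₀)| ≤ C * |x - x₀| := fun r hr => by
    have := hX.norm_image_sub_le_of_norm_hasDerivWithin_le (f := fun y => f r y - w₀ * y)
      (fun y hy => (hf r hr y hy).sub (by simpa using (hasDerivWithinAt_id y X).const_mul w₀))
      (hw r hr) hx₀ hx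
    simpa only [Real.norm_eq_abs, mul_sub, sub_sub_sub_comm] using this
  have := hS.norm_image_sub_le_of_norm_hasDerivWithin_le
    (f := fun r => u r x - u r x₀ - w₀ * (x - x₀) * r)
    (fun r hr => ((hu x hx r hr).sub (hu x₀ hx₀ r hr)).sub
      (by simpa using (hasDerivWithinAt_id r S).const_mul (w₀ * (x - x₀)))) hf_le hs₀ hs
  rw [Real.norm_eq_abs, Real.norm_eq_abs] at this
  convert this using 1
  congr 1
  ring

theorem hasDerivWithinAt_of_mixed_partial {S X : Set ℝ} (hS : Convex ℝ S) (hX : Convex ℝ X)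
    {u f w : ℝ → ℝ → ℝ} {v : ℝ → ℝ} {s₀ x₀ : ℝ} (hs₀ : s₀ ∈ S) (hx₀ : x₀ ∈ X)
    [(𝓝[X \ {x₀}] x₀).NeBot]
    (hu : ∀ x ∈ X, ∀ s ∈ S, HasDerivWithinAt (fun s => u s x) (f s x) S s)
    (hf : ∀ s ∈ S, ∀ x ∈ X, HasDerivWithinAt (f s) (w s x) X x)
    (hv : ∀ s ∈ S, HasDerivWithinAt (u s) (v s) X x₀)
    (hw : ContinuousWithinAt (Function.uncurry w) (S ×ˢ X) (s₀, x₀)) :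
    HasDerivWithinAt v (w s₀ x₀) S s₀ := by
  rw [hasDerivWithinAt_iff_isLittleO, Asymptotics.isLittleO_iff]
  intro ε hε
  obtain ⟨δ, hδ, hwδ⟩ := Metric.continuousWithinAt_iff.1 hw ε hε
  filter_upwards [inter_mem_nhdsWithin S (Metric.ball_mem_nhds s₀ hδ)] with s hs
  have hslope := (hasDerivWithinAt_iff_tendsto_slope.1 ((hv s hs.1).sub (hv s₀ hs₀))).sub_const
    (w s₀ x₀ * (s - s₀))
  rw [smul_eq_mul, mul_comm (s - s₀)]
  refine le_of_tendsto hslope.norm ?_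
  filter_upwards [self_mem_nhdsWithin, mem_nhdsWithin_of_mem_nhds (Metric.ball_mem_nhds x₀ hδ)]
    with x hx hxδ
  have hle := abs_mixed_difference_sub_le (C := ε) (hS.inter (convex_ball s₀ δ))
    (hX.inter (convex_ball x₀ δ))
    (fun y hy r hr => (hu y hy.1 r hr.1).mono inter_subset_left)
    (fun r hr y hy => (hf r hr.1 y hy.1).mono inter_subset_left)
    (fun r hr y hy => (hwδ (x := (r, y)) ⟨hr.1, hy.1⟩ (max_lt hr.2 hy.2)).le)
    ⟨hs₀, Metric.mem_ball_self hδ⟩ hs ⟨hx₀, Metric.mem_ball_self hδ⟩ ⟨hx.1, hxδ⟩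
  have hne : x - x₀ ≠ 0 := sub_ne_zero.2 hx.2
  calc ‖slope (u s - u s₀) x₀ x - w s₀ x₀ * (s - s₀)‖
      = |u s x - u s₀ x - (u s x₀ - u s₀ x₀) - w s₀ x₀ * (s - s₀) * (x - x₀)| / |x - x₀| := by
        rw [Real.norm_eq_abs, ← abs_div, sub_div, mul_div_cancel_right₀ _ hne, slope_def_field]
        rfl
    _ ≤ ε * |s - s₀| := (div_le_iff₀ (abs_pos.2 hne)).2 (hle.trans_eq (by ring))

theorem eqOn_const_of_equilibrium {F y : ℝ → ℝ} {a b : ℝ} (hF : ContDiff ℝ 1 F)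
    (ha : F (y a) = 0) (hy : ContinuousOn y (Icc a b))
    (hy' : ∀ x ∈ Ico a b, HasDerivWithinAt y (F (y x)) (Ici x) x) :
    EqOn y (fun _ => y a) (Icc a b) := by
  obtain ⟨L, hL⟩ := hF.locallyLipschitz.locallyLipschitzOn.exists_lipschitzOnWith_of_compact
    (isCompact_Icc.image_of_continuousOn hy)
  exact ODE_solution_unique_of_mem_Icc_right (v := fun _ => F) (fun _ _ => hL) hy hy'
    (fun x hx => mem_image_of_mem y (Ico_subset_Icc_self hx)) continuousOn_const
    (fun x _ => by simpa only [ha] using hasDerivWithinAt_const x _ (y a))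
    (fun x hx => mem_image_of_mem y (left_mem_Icc.2 (hx.1.trans hx.2.le))) rfl

end Calculus

section OrderedGap

/-- The increment of `Θ` between the smaller and the larger of `u x` and `v x`: an antiderivative
of `sign (u - v) * (Θ ∘ u - Θ ∘ v)'` that vanishes wherever `u` and `v` agree. -/
def orderedGap (Θ u v : ℝ → ℝ) (x : ℝ) : ℝ := Θ (max (u x) (v x)) - Θ (min (u x) (v x))

variable {Θ θ u v : ℝ → ℝ}

theorem orderedGap_comm (Θ u v : ℝ → ℝ) : orderedGap Θ u v = orderedGap Θ v u := by
  funext x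
  rw [orderedGap, orderedGap, max_comm, min_comm]

theorem orderedGap_of_le {x : ℝ} (h : v x ≤ u x) : orderedGap Θ u v x = Θ (u x) - Θ (v x) := by
  rw [orderedGap, max_eq_left h, min_eq_right h]

theorem orderedGap_of_eq {x : ℝ} (h : u x = v x) : orderedGap Θ u v x = 0 := by
  rw [orderedGap_of_le h.ge, h, sub_self]

theorem continuousOn_orderedGap {s : Set ℝ} (hΘ : Continuous Θ) (hu : ContinuousOn u s)
    (hv : ContinuousOn v s) : ContinuousOn (orderedGap Θ u v) s :=
  (hΘ.comp_continuousOn (hu.sup hv)).sub (hΘ.comp_continuousOn (hu.inf hv))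

theorem frequently_slope_orderedGap_lt {x u' v' r : ℝ} (hΘ : ∀ y, HasDerivAt Θ (θ y) y)
    (hu : HasDerivWithinAt u u' (Ioi x) x) (hv : HasDerivWithinAt v v' (Ioi x) x)
    (hle : ∃ᶠ z in 𝓝[>] x, v z ≤ u z) (hr : v x ≤ u x → θ (u x) * u' - θ (v x) * v' < r) :
    ∃ᶠ z in 𝓝[>] x, slope (orderedGap Θ u v) x z < r := by
  have hx : v x ≤ u x :=
    le_of_tendsto_of_tendsto_of_frequently hv.continuousWithinAt hu.continuousWithinAt hle
  have hslope := (hasDerivWithinAt_iff_tendsto_slope' self_notMem_Ioi).1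
    (((hΘ (u x)).comp_hasDerivWithinAt x hu).sub ((hΘ (v x)).comp_hasDerivWithinAt x hv))
  refine (hle.and_eventually (hslope.eventually_lt_const (hr hx))).mono fun z hz => ?_
  rw [slope_def_field, orderedGap_of_le hz.1, orderedGap_of_le hx]
  exact (slope_def_field (Θ ∘ u - Θ ∘ v) x z).symm.trans_lt hz.2

theorem integral_nonneg_of_deriv_comp_sub_le {φ u' v' : ℝ → ℝ} {a b : ℝ} (hab : a ≤ b)
    (hΘ : ∀ y, HasDerivAt Θ (θ y) y)
    (hu : ContinuousOn u (Icc a b)) (hv : ContinuousOn v (Icc a b))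
    (hu' : ∀ x ∈ Ico a b, HasDerivWithinAt u (u' x) (Ioi x) x)
    (hv' : ∀ x ∈ Ico a b, HasDerivWithinAt v (v' x) (Ioi x) x)
    (ha : u a = v a) (hb : u b = v b) (hφ : ContinuousOn φ (Icc a b))
    (huv : ∀ x ∈ Ico a b, v x ≤ u x → θ (u x) * u' x - θ (v x) * v' x ≤ φ x)
    (hvu : ∀ x ∈ Ico a b, u x ≤ v x → θ (v x) * v' x - θ (u x) * u' x ≤ φ x) :
    0 ≤ ∫ x in a..b, φ x := by
  have hΘ_cont : Continuous Θ := continuous_iff_continuousAt.2 fun y => (hΘ y).continuousAt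
  have hgap := sub_le_integral_of_liminf_slope_right_le hab (continuousOn_orderedGap hΘ_cont hu hv)
    hφ fun x hx r hr => ?_
  · rwa [orderedGap_of_eq ha, orderedGap_of_eq hb, sub_self] at hgap
  have hsplit : ∃ᶠ z in 𝓝[>] x, v z ≤ u z ∨ u z ≤ v z :=
    Frequently.of_forall fun z => le_total _ _
  rcases frequently_or_distrib.1 hsplit with h | h
  · exact frequently_slope_orderedGap_lt hΘ (hu' x hx) (hv' x hx) h
      fun hle => (huv x hx hle).trans_lt hr
  · rw [orderedGap_comm]
    exact frequently_slope_orderedGap_lt hΘ (hv' x hx) (hu' x hx) h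
      fun hle => (hvu x hx hle).trans_lt hr

end OrderedGap

section JordanDecomposition

/-- The nonincreasing part of the Jordan decomposition of `f` on `[0, Φ]`, normalised to vanish
at `Φ`. -/
def decreasingPart (f : ℝ → ℝ) (Φ y : ℝ) : ℝ := ∫ x in Φ..y, min (deriv f x) 0

/-- The nondecreasing part of the Jordan decomposition of `f`, normalised to vanish at `0`. -/
def increasingPart (f : ℝ → ℝ) (y : ℝ) : ℝ := ∫ x in 0..y, max (deriv f x) 0

variable {f : ℝ → ℝ} {Φ : ℝ}

theorem intervalIntegrable_min_deriv (hf : ContDiff ℝ 1 f) (a b : ℝ) :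
    IntervalIntegrable (fun x => min (deriv f x) 0) volume a b :=
  ((hf.continuous_deriv le_rfl).min continuous_const).intervalIntegrable a b

theorem intervalIntegrable_max_deriv (hf : ContDiff ℝ 1 f) (a b : ℝ) :
    IntervalIntegrable (fun x => max (deriv f x) 0) volume a b :=
  ((hf.continuous_deriv le_rfl).max continuous_const).intervalIntegrable a b

theorem continuous_decreasingPart (hf : ContDiff ℝ 1 f) : Continuous (decreasingPart f Φ) :=
  intervalIntegral.continuous_primitive (intervalIntegrable_min_deriv hf) Φ

theorem continuous_increasingPart (hf : ContDiff ℝ 1 f) : Continuous (increasingPart f) :=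
  intervalIntegral.continuous_primitive (intervalIntegrable_max_deriv hf) 0

theorem antitone_decreasingPart (hf : ContDiff ℝ 1 f) : Antitone (decreasingPart f Φ) := by
  intro x y hxy
  have hsplit := intervalIntegral.integral_add_adjacent_intervals
    (intervalIntegrable_min_deriv hf Φ x) (intervalIntegrable_min_deriv hf x y)
  have hnonpos : ∫ z in x..y, min (deriv f z) 0 ≤ ∫ z in x..y, 0 :=
    intervalIntegral.integral_mono_on hxy (intervalIntegrable_min_deriv hf x y)
      intervalIntegrable_const fun z _ => min_le_right _ _
  rw [intervalIntegral.integral_zero] at hnonpos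
  rw [decreasingPart, decreasingPart]
  linarith

theorem monotone_increasingPart (hf : ContDiff ℝ 1 f) : Monotone (increasingPart f) := by
  intro x y hxy
  have hsplit := intervalIntegral.integral_add_adjacent_intervals
    (intervalIntegrable_max_deriv hf 0 x) (intervalIntegrable_max_deriv hf x y)
  have hnonneg : 0 ≤ ∫ z in x..y, max (deriv f z) 0 :=
    intervalIntegral.integral_nonneg hxy fun z _ => le_max_right _ _
  rw [increasingPart, increasingPart]
  linarith

theorem decreasingPart_nonneg (hf : ContDiff ℝ 1 f) {y : ℝ} (hy : y ≤ Φ) :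
    0 ≤ decreasingPart f Φ y :=
  intervalIntegral.integral_same.symm.trans_le (antitone_decreasingPart hf hy)

theorem increasingPart_nonneg (hf : ContDiff ℝ 1 f) {y : ℝ} (hy : 0 ≤ y) :
    0 ≤ increasingPart f y :=
  intervalIntegral.integral_same.symm.trans_le (monotone_increasingPart hf hy)

theorem eq_add_decreasingPart_add_increasingPart (hf : ContDiff ℝ 1 f) (Φ y : ℝ) :
    f y = f 0 + (∫ x in 0..Φ, min (deriv f x) 0) + decreasingPart f Φ y + increasingPart f y := by
  have hFTC : ∫ x in 0..y, deriv f x = f y - f 0 := intervalIntegral.integral_deriv_eq_sub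
    (fun x _ => (hf.differentiable one_ne_zero) x)
    ((hf.continuous_deriv le_rfl).intervalIntegrable _ _)
  have hadd := intervalIntegral.integral_add (intervalIntegrable_min_deriv hf 0 y)
    (intervalIntegrable_max_deriv hf 0 y)
  simp only [min_add_max, add_zero] at hadd
  have hsplit := intervalIntegral.integral_add_adjacent_intervals
    (intervalIntegrable_min_deriv hf 0 Φ) (intervalIntegrable_min_deriv hf Φ y)
  rw [decreasingPart, increasingPart]
  linarith

theorem deriv_eq_kmin_add {K : ℝ → ℝ} (hK : ContDiff ℝ 2 K) (Φ y : ℝ) :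
    deriv K y = kmin K Φ + decreasingPart (deriv K) Φ y + increasingPart (deriv K) y :=
  eq_add_decreasingPart_add_increasingPart hK.deriv' Φ y

theorem mul_abs_sub_add_le_abs {k a₁ a₂ b₁ b₂ P p h : ℝ} (hh : 0 ≤ h) (hP : 0 ≤ P) (hp : 0 ≤ p)
    (ha₁ : 0 ≤ a₁) (ha : a₁ ≤ a₂) (hb₂ : 0 ≤ b₂) (hb : b₂ ≤ b₁) :
    (1 + h * k) * |P - p| + h * ((a₁ - b₁) * P - (a₂ - b₂) * p) ≤
      |P - p + h * ((k + a₁ + b₁) * P - (k + a₂ + b₂) * p)| := by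
  rcases le_total p P with hpP | hPp
  · rw [abs_of_nonneg (a := P - p) (by linarith)]
    have hbP : b₂ * p ≤ b₁ * P := mul_le_mul hb hpP hp (hb₂.trans hb)
    refine le_trans ?_ (le_abs_self _)
    linear_combination 2 * h * hbP
  · rw [abs_of_nonpos (a := P - p) (by linarith)]
    have haP : a₁ * P ≤ a₂ * p := mul_le_mul ha hPp hP (ha₁.trans ha)
    refine le_trans ?_ (neg_le_abs _)
    linear_combination 2 * h * haP

theorem mul_decreasingPart_sub_increasingPart_sub_le {K : ℝ → ℝ} (hK : ContDiff ℝ 2 K)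
    {h y z P p : ℝ} (hh : 0 ≤ h) (hz : 0 ≤ z) (hzy : z ≤ y) (hy : y ≤ Φ) (hP : 0 ≤ P)
    (hp : 0 ≤ p) :
    h * (decreasingPart (deriv K) Φ y - increasingPart (deriv K) y) * P -
        h * (decreasingPart (deriv K) Φ z - increasingPart (deriv K) z) * p ≤
      |P - p + h * (deriv K y * P - deriv K z * p)| - (1 + h * kmin K Φ) * |P - p| := by
  have hK' : ContDiff ℝ 1 (deriv K) := hK.deriv'
  have := mul_abs_sub_add_le_abs (k := kmin K Φ) hh hP hp (decreasingPart_nonneg hK' hy)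
    (antitone_decreasingPart hK' hzy) (increasingPart_nonneg hK' hz)
    (monotone_increasingPart hK' hzy)
  rw [← deriv_eq_kmin_add hK, ← deriv_eq_kmin_add hK] at this
  linarith

end JordanDecomposition

section PhaseProfile

/-- A phase profile: a nondecreasing `C¹` function on `[0, 1]` running from `0` to `Φ`, such as
every time slice of a solution. -/
structure IsPhaseProfile (Φ : ℝ) (u : ℝ → ℝ) : Prop where
  contDiffOn : ContDiffOn ℝ 1 u (Icc 0 1)
  monotoneOn : MonotoneOn u (Icc 0 1)
  map_zero : u 0 = 0
  map_one : u 1 = Φ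

/-- The `L¹(0, 1)` distance of the derivatives of `u` and `v`. -/
def profileDist (u v : ℝ → ℝ) : ℝ :=
  ∫ η in 0..1, |derivWithin u (Icc 0 1) η - derivWithin v (Icc 0 1) η|

/-- The derivative of `K ∘ u`: the rate at which, along a characteristic, the slope of a solution
with time slice `u` grows. -/
def slopeGrowth (K u : ℝ → ℝ) (η : ℝ) : ℝ := deriv K (u η) * derivWithin u (Icc 0 1) η

variable {Φ : ℝ} {u v : ℝ → ℝ}

theorem profileDist_congr {u' v' : ℝ → ℝ} (hu : EqOn u u' (Icc 0 1)) (hv : EqOn v v' (Icc 0 1)) :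
    profileDist u v = profileDist u' v' := by
  refine intervalIntegral.integral_congr fun η hη => ?_
  rw [uIcc_of_le zero_le_one] at hη
  simp only [derivWithin_congr hu (hu hη), derivWithin_congr hv (hv hη)]

namespace IsPhaseProfile

theorem mem_Icc (hu : IsPhaseProfile Φ u) {η : ℝ} (hη : η ∈ Icc (0 : ℝ) 1) : u η ∈ Icc 0 Φ :=
  ⟨hu.map_zero ▸ hu.monotoneOn (left_mem_Icc.2 zero_le_one) hη hη.1,
    hu.map_one ▸ hu.monotoneOn hη (right_mem_Icc.2 zero_le_one) hη.2⟩

theorem hasDerivWithinAt (hu : IsPhaseProfile Φ u) {η : ℝ} (hη : η ∈ Icc (0 : ℝ) 1) :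
    HasDerivWithinAt u (derivWithin u (Icc 0 1) η) (Icc 0 1) η :=
  (hu.contDiffOn.differentiableOn one_ne_zero η hη).hasDerivWithinAt

theorem hasDerivWithinAt_Ioi (hu : IsPhaseProfile Φ u) {η : ℝ} (hη : η ∈ Ico (0 : ℝ) 1) :
    HasDerivWithinAt u (derivWithin u (Icc 0 1) η) (Ioi η) η :=
  (hu.hasDerivWithinAt (Ico_subset_Icc_self hη)).mono_of_mem_nhdsWithin
    (Icc_mem_nhdsGT_of_mem hη)

theorem continuousOn_derivWithin (hu : IsPhaseProfile Φ u) :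
    ContinuousOn (derivWithin u (Icc 0 1)) (Icc 0 1) :=
  hu.contDiffOn.continuousOn_derivWithin (uniqueDiffOn_Icc one_pos) le_rfl

theorem intervalIntegrable_derivWithin (hu : IsPhaseProfile Φ u) {x : ℝ}
    (hx : x ∈ Icc (0 : ℝ) 1) : IntervalIntegrable (derivWithin u (Icc 0 1)) volume 0 x :=
  (hu.continuousOn_derivWithin.mono (Icc_subset_Icc_right hx.2)).intervalIntegrable_of_Icc hx.1

theorem integral_derivWithin (hu : IsPhaseProfile Φ u) {x : ℝ} (hx : x ∈ Icc (0 : ℝ) 1) :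
    ∫ η in 0..x, derivWithin u (Icc 0 1) η = u x := by
  rw [intervalIntegral.integral_eq_sub_of_hasDeriv_right_of_le hx.1
    (hu.contDiffOn.continuousOn.mono (Icc_subset_Icc_right hx.2))
    (fun η hη => hu.hasDerivWithinAt_Ioi ⟨hη.1.le, hη.2.trans_le hx.2⟩)
    (hu.intervalIntegrable_derivWithin hx), hu.map_zero, sub_zero]

theorem profileDist_le_two_mul (hu : IsPhaseProfile Φ u) (hv : IsPhaseProfile Φ v) :
    profileDist u v ≤ 2 * Φ := by
  have hone : (1 : ℝ) ∈ Icc (0 : ℝ) 1 := right_mem_Icc.2 zero_le_one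
  have hu_int := hu.intervalIntegrable_derivWithin hone
  have hv_int := hv.intervalIntegrable_derivWithin hone
  calc profileDist u v
      ≤ ∫ η in 0..1, (derivWithin u (Icc 0 1) η + derivWithin v (Icc 0 1) η) :=
        intervalIntegral.integral_mono_on zero_le_one (hu_int.sub hv_int).abs (hu_int.add hv_int)
          fun η _ => (abs_sub _ _).trans_eq <| congrArg₂ (· + ·)
            (abs_of_nonneg hu.monotoneOn.derivWithin_nonneg)
            (abs_of_nonneg hv.monotoneOn.derivWithin_nonneg)
    _ = 2 * Φ := by
        rw [intervalIntegral.integral_add hu_int hv_int, hu.integral_derivWithin hone,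
          hv.integral_derivWithin hone, hu.map_one, hv.map_one, two_mul]

theorem abs_sub_le_profileDist (hu : IsPhaseProfile Φ u) (hv : IsPhaseProfile Φ v) {x : ℝ}
    (hx : x ∈ Icc (0 : ℝ) 1) : |u x - v x| ≤ profileDist u v := by
  have hone : (1 : ℝ) ∈ Icc (0 : ℝ) 1 := right_mem_Icc.2 zero_le_one
  rw [← hu.integral_derivWithin hx, ← hv.integral_derivWithin hx, ← intervalIntegral.integral_sub
    (hu.intervalIntegrable_derivWithin hx) (hv.intervalIntegrable_derivWithin hx)]
  refine (intervalIntegral.abs_integral_le_integral_abs hx.1).trans ?_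
  exact intervalIntegral.integral_mono_interval le_rfl hx.1 hx.2
    (Eventually.of_forall fun _ => abs_nonneg _)
    ((hu.intervalIntegrable_derivWithin hone).sub (hv.intervalIntegrable_derivWithin hone)).abs

theorem continuousOn_slopeGrowth (hu : IsPhaseProfile Φ u) {K : ℝ → ℝ} (hK : ContDiff ℝ 1 K) :
    ContinuousOn (slopeGrowth K u) (Icc 0 1) :=
  ((hK.continuous_deriv le_rfl).comp_continuousOn hu.contDiffOn.continuousOn).mul
    hu.continuousOn_derivWithin

theorem mul_profileDist_le_integral_abs (hu : IsPhaseProfile Φ u) (hv : IsPhaseProfile Φ v)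
    {K : ℝ → ℝ} (hK : ContDiff ℝ 2 K) {h : ℝ} (hh : 0 ≤ h) :
    (1 + h * kmin K Φ) * profileDist u v ≤
      ∫ η in 0..1, |derivWithin u (Icc 0 1) η - derivWithin v (Icc 0 1) η +
        h * (slopeGrowth K u η - slopeGrowth K v η)| := by
  have hK' : ContDiff ℝ 1 (deriv K) := hK.deriv'
  have hweight : Continuous fun y =>
      h * (decreasingPart (deriv K) Φ y - increasingPart (deriv K) y) :=
    continuous_const.mul ((continuous_decreasingPart hK').sub (continuous_increasingPart hK'))
  have hdist : ContinuousOn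
      (fun η => |derivWithin u (Icc 0 1) η - derivWithin v (Icc 0 1) η|) (Icc 0 1) :=
    (hu.continuousOn_derivWithin.sub hv.continuousOn_derivWithin).abs
  have hstep : ContinuousOn (fun η => |derivWithin u (Icc 0 1) η - derivWithin v (Icc 0 1) η +
      h * (slopeGrowth K u η - slopeGrowth K v η)|) (Icc 0 1) :=
    ((hu.continuousOn_derivWithin.sub hv.continuousOn_derivWithin).add (continuousOn_const.mul
      ((hu.continuousOn_slopeGrowth (hK.of_le one_le_two)).sub
        (hv.continuousOn_slopeGrowth (hK.of_le one_le_two))))).abs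
  rw [profileDist, ← intervalIntegral.integral_const_mul, ← sub_nonneg,
    ← intervalIntegral.integral_sub (hstep.intervalIntegrable_of_Icc zero_le_one)
      ((hdist.intervalIntegrable_of_Icc zero_le_one).const_mul _)]
  -- `Θ` is the primitive of `hweight`: its `orderedGap` absorbs what `k_min` leaves of `deriv K`.
  refine integral_nonneg_of_deriv_comp_sub_le zero_le_one
    (fun y => (hweight.integral_hasStrictDerivAt 0 y).hasDerivAt)
    hu.contDiffOn.continuousOn hv.contDiffOn.continuousOn
    (fun _ hx => hu.hasDerivWithinAt_Ioi hx) (fun _ hx => hv.hasDerivWithinAt_Ioi hx)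
    (hu.map_zero.trans hv.map_zero.symm) (hu.map_one.trans hv.map_one.symm)
    (hstep.sub (continuousOn_const.mul hdist)) (fun x hx hle => ?_) fun x hx hle => ?_
  · exact mul_decreasingPart_sub_increasingPart_sub_le hK hh
      (hv.mem_Icc (Ico_subset_Icc_self hx)).1 hle (hu.mem_Icc (Ico_subset_Icc_self hx)).2
      hu.monotoneOn.derivWithin_nonneg hv.monotoneOn.derivWithin_nonneg
  · convert mul_decreasingPart_sub_increasingPart_sub_le hK hh
      (hu.mem_Icc (Ico_subset_Icc_self hx)).1 hle (hv.mem_Icc (Ico_subset_Icc_self hx)).2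
      hv.monotoneOn.derivWithin_nonneg hu.monotoneOn.derivWithin_nonneg using 2
    · rw [← abs_neg, slopeGrowth, slopeGrowth]
      congr 1
      ring
    · rw [abs_sub_comm]

end IsPhaseProfile

end PhaseProfile

theorem integral_le_integral_shift_add {f F : ℝ → ℝ} {a b : ℝ} (c C : ℝ) (hab : a ≤ b)
    (hf : IntervalIntegrable f volume a b) (hF : IntervalIntegrable F volume (a + c) (b + c))
    (hle : ∀ x ∈ Ioo a b, f x ≤ F (x + c) + C) :
    ∫ x in a..b, f x ≤ (∫ x in (a + c)..(b + c), F x) + (b - a) * C := by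
  have hF' : IntervalIntegrable (fun x => F (x + c)) volume a b := by
    simpa using hF.comp_add_right c
  calc ∫ x in a..b, f x ≤ ∫ x in a..b, (F (x + c) + C) :=
        intervalIntegral.integral_mono_on_of_le_Ioo hab hf (hF'.add intervalIntegrable_const) hle
    _ = (∫ x in (a + c)..(b + c), F x) + (b - a) * C := by
        rw [intervalIntegral.integral_add hF' intervalIntegrable_const,
          intervalIntegral.integral_comp_add_right, intervalIntegral.integral_const, smul_eq_mul]

section PeriodicTransport

/-- A continuous solution `p` of the transport equation `∂_τ p + ∂_η p = g` on `[0, t] × [0, 1]`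
with periodic boundary values; the equation is imposed along characteristics only, so `p` need not
have partial derivatives. -/
structure IsPeriodicTransport (t : ℝ) (p g : ℝ → ℝ → ℝ) : Prop where
  continuousOn : ContinuousOn (Function.uncurry p) (Icc 0 t ×ˢ Icc 0 1)
  continuousOn_source : ContinuousOn (Function.uncurry g) (Icc 0 t ×ˢ Icc 0 1)
  periodic : ∀ τ ∈ Icc 0 t, p τ 0 = p τ 1
  hasDerivWithinAt : ∀ τ ξ h, 0 ≤ τ → τ + h ≤ t → 0 ≤ ξ → ξ + h < 1 → ∀ s ∈ Icc 0 h,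
    HasDerivWithinAt (fun s => p (τ + s) (ξ + s)) (g (τ + s) (ξ + s)) (Icc 0 h) s

namespace IsPeriodicTransport

variable {t τ ε : ℝ} {p g : ℝ → ℝ → ℝ}

theorem continuousOn_slice (hp : IsPeriodicTransport t p g) (hτ : τ ∈ Icc 0 t) :
    ContinuousOn (p τ) (Icc 0 1) :=
  hp.continuousOn.comp (f := fun η => (τ, η)) (by fun_prop) fun _ hη => ⟨hτ, hη⟩

theorem continuousOn_source_slice (hp : IsPeriodicTransport t p g) (hτ : τ ∈ Icc 0 t) :
    ContinuousOn (g τ) (Icc 0 1) :=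
  hp.continuousOn_source.comp (f := fun η => (τ, η)) (by fun_prop) fun _ hη => ⟨hτ, hη⟩

theorem eventually_abs_add_mul_le_shift (hp : IsPeriodicTransport t p g) (hτ : τ ∈ Ico 0 t)
    (hε : 0 < ε) : ∀ᶠ h in 𝓝[>] 0, ∀ ξ ∈ Ico 0 (1 - h),
      |p τ ξ + h * g τ ξ| ≤ |p (τ + h) (ξ + h)| + h * ε := by
  obtain ⟨δ, hδ, hgδ⟩ := Metric.uniformContinuousOn_iff.1
    ((isCompact_Icc.prod isCompact_Icc).uniformContinuousOn_of_continuous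
      hp.continuousOn_source) ε hε
  filter_upwards [Ioo_mem_nhdsGT (lt_min hδ (sub_pos.2 hτ.2))] with h hh ξ hξ
  obtain ⟨hhδ, hht⟩ := lt_min_iff.1 hh.2
  have hmem : ∀ s ∈ Icc 0 h, (τ + s, ξ + s) ∈ Icc 0 t ×ˢ Icc (0 : ℝ) 1 := fun s hs =>
    ⟨⟨add_nonneg hτ.1 hs.1, by linarith [hs.2]⟩, add_nonneg hξ.1 hs.1, by linarith [hξ.2, hs.2]⟩
  have hmem_start : (τ, ξ) ∈ Icc 0 t ×ˢ Icc (0 : ℝ) 1 := by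
    simpa only [add_zero] using hmem 0 (left_mem_Icc.2 hh.1.le)
  have hg_le : ∀ s ∈ Icc 0 h, ‖g (τ + s) (ξ + s) - g τ ξ‖ ≤ ε := fun s hs => by
    refine (hgδ (τ + s, ξ + s) (hmem s hs) (τ, ξ) hmem_start ?_).le
    rw [Prod.dist_eq, dist_self_add_left, dist_self_add_left, max_self, Real.norm_of_nonneg hs.1]
    exact hs.2.trans_lt hhδ
  have hmvt := (convex_Icc 0 h).norm_image_sub_le_of_norm_hasDerivWithin_le
    (f := fun s => p (τ + s) (ξ + s) - s * g τ ξ)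
    (fun s hs => (hp.hasDerivWithinAt τ ξ h hτ.1 (by linarith) hξ.1 (by linarith [hξ.2]) s hs).sub
      (by simpa using (hasDerivWithinAt_id s (Icc 0 h)).mul_const (g τ ξ)))
    hg_le (left_mem_Icc.2 hh.1.le) (right_mem_Icc.2 hh.1.le)
  have hlinear : |p τ ξ + h * g τ ξ - p (τ + h) (ξ + h)| ≤ h * ε := by
    rw [abs_sub_comm, ← sub_sub]
    simpa [abs_of_pos hh.1, sub_right_comm, mul_comm] using hmvt
  linarith [abs_sub_abs_le_abs_sub (p τ ξ + h * g τ ξ) (p (τ + h) (ξ + h))]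

theorem eventually_abs_add_mul_le_wrap (hp : IsPeriodicTransport t p g) (hτ : τ ∈ Ico 0 t)
    (hε : 0 < ε) : ∀ᶠ h in 𝓝[>] 0, ∀ ξ ∈ Icc (1 - h) 1,
      |p τ ξ + h * g τ ξ| ≤ |p (τ + h) (ξ + (h - 1))| + ε := by
  set D : Set (ℝ × ℝ) := {z | z.1 ∈ Icc 0 (t - τ) ∧ z.1 ≤ 1 ∧ z.2 ∈ Icc (1 - z.1) 1}
  have hτ' : τ ∈ Icc 0 t := Ico_subset_Icc_self hτ
  have hunit : MapsTo Prod.snd D (Icc 0 1) := fun z hz => ⟨by linarith [hz.2.1, hz.2.2.1], hz.2.2.2⟩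
  have hwrap : MapsTo (fun z : ℝ × ℝ => (τ + z.1, z.2 + (z.1 - 1))) D (Icc 0 t ×ˢ Icc 0 1) := by
    rintro ⟨h, ξ⟩ ⟨⟨h0, ht⟩, h1, hξ⟩
    dsimp only at *
    exact ⟨⟨by linarith [hτ.1], by linarith⟩, by linarith [hξ.1], by linarith [hξ.2]⟩
  have hcont : ContinuousOn (fun z : ℝ × ℝ =>
      |p τ z.2 + z.1 * g τ z.2| - |p (τ + z.1) (z.2 + (z.1 - 1))|) D :=
    (((hp.continuousOn_slice hτ').comp continuousOn_snd hunit).add (continuousOn_fst.mul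
      ((hp.continuousOn_source_slice hτ').comp continuousOn_snd hunit))).abs.sub
      (hp.continuousOn.comp (by fun_prop) hwrap).abs
  have hmem : ((0, 1) : ℝ × ℝ) ∈ D := by simp [D, hτ.2.le]
  obtain ⟨δ, hδ, hle⟩ := Metric.continuousWithinAt_iff.1 (hcont _ hmem) ε hε
  filter_upwards [Ioo_mem_nhdsGT (lt_min hδ (lt_min (sub_pos.2 hτ.2) one_pos))] with h hh ξ hξ
  obtain ⟨hhδ, hht, hh1⟩ := by simpa only [lt_min_iff] using hh.2
  have hdist : dist (h, ξ) (0, 1) < δ := by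
    rw [Prod.dist_eq, Real.dist_eq, Real.dist_eq, max_lt_iff, abs_lt, abs_lt]
    refine ⟨⟨?_, ?_⟩, ?_, ?_⟩ <;> linarith [hh.1, hξ.1, hξ.2]
  have hlt := (le_abs_self _).trans_lt (hle ⟨⟨hh.1.le, hht.le⟩, hh1.le, hξ⟩ hdist)
  simp only [zero_mul, add_zero, zero_sub, add_neg_cancel, hp.periodic τ hτ', sub_self,
    sub_zero] at hlt
  linarith

theorem eventually_integral_abs_le (hp : IsPeriodicTransport t p g) (hτ : τ ∈ Ico 0 t)
    (hε : 0 < ε) : ∀ᶠ h in 𝓝[>] 0,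
      ∫ η in 0..1, |p τ η + h * g τ η| ≤ (∫ η in 0..1, |p (τ + h) η|) + h * ε := by
  filter_upwards [hp.eventually_abs_add_mul_le_shift hτ (half_pos hε),
    hp.eventually_abs_add_mul_le_wrap hτ (half_pos hε),
    Ioo_mem_nhdsGT (lt_min (sub_pos.2 hτ.2) one_pos)] with h hshift hwrap hh
  obtain ⟨hht, hh1⟩ := lt_min_iff.1 hh.2
  have hτ' : τ ∈ Icc 0 t := Ico_subset_Icc_self hτ
  have hτh : τ + h ∈ Icc 0 t := ⟨by linarith [hτ.1, hh.1], by linarith⟩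
  have hstep : ContinuousOn (fun η => |p τ η + h * g τ η|) (Icc 0 1) :=
    ((hp.continuousOn_slice hτ').add
      (continuousOn_const.mul (hp.continuousOn_source_slice hτ'))).abs
  have hend : ContinuousOn (fun η => |p (τ + h) η|) (Icc 0 1) := (hp.continuousOn_slice hτh).abs
  have hint : ∀ {f : ℝ → ℝ}, ContinuousOn f (Icc 0 1) → ∀ {a b : ℝ}, 0 ≤ a → a ≤ b → b ≤ 1 →
      IntervalIntegrable f volume a b := fun hf a b ha hab hb =>
    (hf.mono (Icc_subset_Icc ha hb)).intervalIntegrable_of_Icc hab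
  have hleft := integral_le_integral_shift_add (a := 0) (b := 1 - h) h (h * (ε / 2))
    (by linarith) (hint hstep le_rfl (by linarith) (by linarith [hh.1]))
    (hint hend (by linarith [hh.1]) (by linarith) (by linarith))
    fun ξ hξ => hshift ξ (Ioo_subset_Ico_self hξ)
  have hright := integral_le_integral_shift_add (a := 1 - h) (b := 1) (h - 1) (ε / 2)
    (by linarith [hh.1]) (hint hstep (by linarith) (by linarith [hh.1]) le_rfl)
    (hint hend (by linarith) (by linarith [hh.1]) (by linarith))
    fun ξ hξ => hwrap ξ (Ioo_subset_Icc_self hξ)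
  have hsplit_step := intervalIntegral.integral_add_adjacent_intervals
    (hint hstep le_rfl (b := 1 - h) (by linarith) (by linarith [hh.1]))
    (hint hstep (by linarith) (by linarith [hh.1]) le_rfl)
  have hsplit_end := intervalIntegral.integral_add_adjacent_intervals
    (hint hend le_rfl hh.1.le hh1.le) (hint hend hh.1.le hh1.le le_rfl)
  rw [zero_add, sub_add_cancel] at hleft
  rw [sub_add_sub_cancel', sub_self, add_sub_cancel] at hright
  have : (1 - h) * (h * (ε / 2)) ≤ h * (ε / 2) :=
    mul_le_of_le_one_left (by have := hh.1; positivity) (by linarith [hh.1])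
  linarith

theorem exp_mul_integral_abs_le (hp : IsPeriodicTransport t p g) (ht : 0 ≤ t) {k : ℝ}
    (hexpand : ∀ τ ∈ Ico 0 t, ∀ h, 0 ≤ h →
      (1 + h * k) * ∫ η in 0..1, |p τ η| ≤ ∫ η in 0..1, |p τ η + h * g τ η|) :
    exp (k * t) * ∫ η in 0..1, |p 0 η| ≤ ∫ η in 0..1, |p t η| := by
  have hcont : ContinuousOn (fun τ => ∫ η in 0..1, |p τ η|) (Icc 0 t) :=
    continuousOn_intervalIntegral_of_continuousOn zero_le_one hp.continuousOn.abs
  have hgronwall := le_gronwallBound_of_liminf_deriv_right_le (ε := 0) (K := k)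
    (f' := fun τ => k * -∫ η in 0..1, |p τ η|) hcont.neg (fun τ hτ r hr => ?_) le_rfl
    (fun τ _ => (add_zero _).ge) t (right_mem_Icc.2 ht)
  · rw [gronwallBound_ε0, sub_zero] at hgronwall
    simp only [Pi.neg_apply] at hgronwall
    linarith
  rw [← add_zero τ, ← map_add_left_nhdsGT, frequently_map, add_zero]
  refine Eventually.frequently ?_
  filter_upwards [hp.eventually_integral_abs_le hτ (half_pos (sub_pos.2 hr)),
    self_mem_nhdsWithin] with h hle hh
  have hh0 : 0 < h := hh
  rw [add_sub_cancel_left, inv_mul_lt_iff₀ hh0]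
  have hexp := hexpand τ hτ h hh0.le
  have hmul : h * (k * -∫ η in 0..1, |p τ η|) < h * r := mul_lt_mul_of_pos_left hr hh0
  simp only [Pi.neg_apply]
  linarith

end IsPeriodicTransport

end PeriodicTransport

section Solutions

theorem Icc_subset_Ico0 {T : ℝ≥0∞} {t : ℝ} (ht : t ∈ Ico0 T) : Icc 0 t ⊆ Ico0 T :=
  fun _ hs => ⟨hs.1, (ENNReal.ofReal_le_ofReal hs.2).trans_lt ht.2⟩

theorem isOpen_ofReal_lt (T : ℝ≥0∞) : IsOpen {τ : ℝ | ENNReal.ofReal τ < T} :=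
  isOpen_lt ENNReal.continuous_ofReal continuous_const

theorem Ico0_mem_nhdsGE {T : ℝ≥0∞} {τ : ℝ} (hτ : τ ∈ Ico0 T) : Ico0 T ∈ 𝓝[Ici 0] τ :=
  inter_mem_nhdsWithin _ ((isOpen_ofReal_lt T).mem_nhds hτ.2)

theorem uniqueDiffOn_Ico0_prod_Icc (T : ℝ≥0∞) : UniqueDiffOn ℝ (Ico0 T ×ˢ Icc (0 : ℝ) 1) :=
  ((uniqueDiffOn_Ici 0).inter (isOpen_ofReal_lt T)).prod (uniqueDiffOn_Icc one_pos)

namespace IsQSol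

variable {K : ℝ → ℝ} {Φ : ℝ} {T : ℝ≥0∞} {Qinit : ℝ → ℝ} {Q : ℝ → ℝ → ℝ} {N : ℝ → ℝ} {τ η : ℝ}

theorem hasFDerivWithinAt (hQ : IsQSol K Φ T Qinit Q N) (hτ : τ ∈ Ico0 T)
    (hη : η ∈ Icc (0 : ℝ) 1) : HasFDerivWithinAt (Function.uncurry Q)
      (fderivWithin ℝ (Function.uncurry Q) (Ico0 T ×ˢ Icc 0 1) (τ, η)) (Ico0 T ×ˢ Icc 0 1)
      (τ, η) :=
  (hQ.reg.differentiableOn one_ne_zero _ ⟨hτ, hη⟩).hasFDerivWithinAt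

theorem contDiffOn_slice (hQ : IsQSol K Φ T Qinit Q N) (hτ : τ ∈ Ico0 T) :
    ContDiffOn ℝ 1 (Q τ) (Icc 0 1) :=
  hQ.reg.comp (f := fun η => (τ, η)) (by fun_prop) fun _ hη => ⟨hτ, hη⟩

theorem fderivWithin_apply_snd (hQ : IsQSol K Φ T Qinit Q N) (hτ : τ ∈ Ico0 T)
    (hη : η ∈ Icc (0 : ℝ) 1) :
    fderivWithin ℝ (Function.uncurry Q) (Ico0 T ×ˢ Icc 0 1) (τ, η) (0, 1) = pdEta Q τ η := by
  have hmaps : MapsTo (fun x : ℝ => (τ, x)) (Icc 0 1) (Ico0 T ×ˢ Icc 0 1) := fun _ hx => ⟨hτ, hx⟩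
  have hderiv := (hQ.hasFDerivWithinAt hτ hη).comp_hasDerivWithinAt η
    ((hasDerivWithinAt_const η _ τ).prodMk (hasDerivWithinAt_id η _)) hmaps
  exact (hderiv.derivWithin (uniqueDiffOn_Icc one_pos η hη)).symm

theorem hasDerivWithinAt_fst (hQ : IsQSol K Φ T Qinit Q N) (hτ : τ ∈ Ico0 T)
    (hη : η ∈ Icc (0 : ℝ) 1) : HasDerivWithinAt (fun s => Q s η)
      (fderivWithin ℝ (Function.uncurry Q) (Ico0 T ×ˢ Icc 0 1) (τ, η) (1, 0)) (Ici 0) τ := by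
  have hmaps : MapsTo (fun s : ℝ => (s, η)) (Ico0 T) (Ico0 T ×ˢ Icc 0 1) := fun _ hs => ⟨hs, hη⟩
  have hderiv := (hQ.hasFDerivWithinAt hτ hη).comp_hasDerivWithinAt τ
    ((hasDerivWithinAt_id τ _).prodMk (hasDerivWithinAt_const τ _ η)) hmaps
  exact hderiv.mono_of_mem_nhdsWithin (Ico0_mem_nhdsGE hτ)

theorem fderivWithin_apply_fst (hQ : IsQSol K Φ T Qinit Q N) (hτ : τ ∈ Ico0 T)
    (hη : η ∈ Icc (0 : ℝ) 1) :
    fderivWithin ℝ (Function.uncurry Q) (Ico0 T ×ˢ Icc 0 1) (τ, η) (1, 0) = pdTau Q τ η :=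
  ((hQ.hasDerivWithinAt_fst hτ hη).derivWithin (uniqueDiffOn_Ici 0 τ hτ.1)).symm

theorem continuousOn_fderivWithin_apply (hQ : IsQSol K Φ T Qinit Q N) (z : ℝ × ℝ) :
    ContinuousOn (fun y => fderivWithin ℝ (Function.uncurry Q) (Ico0 T ×ˢ Icc 0 1) y z)
      (Ico0 T ×ˢ Icc 0 1) :=
  (hQ.reg.continuousOn_fderivWithin (uniqueDiffOn_Ico0_prod_Icc T) le_rfl).clm_apply
    continuousOn_const

theorem continuousOn_pdEta (hQ : IsQSol K Φ T Qinit Q N) :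
    ContinuousOn (Function.uncurry (pdEta Q)) (Ico0 T ×ˢ Icc 0 1) :=
  (hQ.continuousOn_fderivWithin_apply (0, 1)).congr fun _ hz =>
    (hQ.fderivWithin_apply_snd hz.1 hz.2).symm

theorem continuousOn_slopeGrowth (hQ : IsQSol K Φ T Qinit Q N) (hK : ContDiff ℝ 1 K) :
    ContinuousOn (Function.uncurry fun τ => slopeGrowth K (Q τ)) (Ico0 T ×ˢ Icc 0 1) :=
  ((hK.continuous_deriv le_rfl).comp_continuousOn hQ.reg.continuousOn).mul hQ.continuousOn_pdEta

theorem fderivWithin_apply_one_one (hQ : IsQSol K Φ T Qinit Q N) (hK : Continuous K)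
    (hτ : τ ∈ Ico0 T) (hη : η ∈ Icc (0 : ℝ) 1) :
    fderivWithin ℝ (Function.uncurry Q) (Ico0 T ×ˢ Icc 0 1) (τ, η) (1, 1) =
      1 / N τ + K (Q τ η) := by
  have hinterior : EqOn
      (fun x => fderivWithin ℝ (Function.uncurry Q) (Ico0 T ×ˢ Icc 0 1) (τ, x) (1, 1))
      (fun x => 1 / N τ + K (Q τ x)) (Ioo 0 1) := fun x hx => by
    have hx' : x ∈ Icc (0 : ℝ) 1 := Ioo_subset_Icc_self hx
    have hdir : ((1, 1) : ℝ × ℝ) = (1, 0) + (0, 1) := by simp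
    simp only [hdir, map_add, hQ.fderivWithin_apply_fst hτ hx', hQ.fderivWithin_apply_snd hτ hx',
      hQ.pde τ hτ x hx]
  refine hinterior.of_subset_closure ?_ ?_ Ioo_subset_Icc_self (closure_Ioo zero_ne_one).ge hη
  · exact (hQ.continuousOn_fderivWithin_apply (1, 1)).comp (by fun_prop) fun x hx => ⟨hτ, hx⟩
  · exact continuousOn_const.add (hK.comp_continuousOn (hQ.contDiffOn_slice hτ).continuousOn)

theorem pdTau_add_pdEta (hQ : IsQSol K Φ T Qinit Q N) (hK : Continuous K) (hτ : τ ∈ Ico0 T)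
    (hη : η ∈ Icc (0 : ℝ) 1) : pdTau Q τ η + pdEta Q τ η = 1 / N τ + K (Q τ η) := by
  rw [← hQ.fderivWithin_apply_one_one hK hτ hη, ← hQ.fderivWithin_apply_fst hτ hη,
    ← hQ.fderivWithin_apply_snd hτ hη, ← map_add, Prod.mk_add_mk, add_zero, zero_add]

theorem hasDerivWithinAt_characteristic (hQ : IsQSol K Φ T Qinit Q N) (hK : Continuous K)
    {ξ s : ℝ} {S : Set ℝ} (hS : MapsTo (fun s => (τ + s, ξ + s)) S (Ico0 T ×ˢ Icc 0 1))
    (hs : s ∈ S) : HasDerivWithinAt (fun s => Q (τ + s) (ξ + s))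
      (1 / N (τ + s) + K (Q (τ + s) (ξ + s))) S s := by
  rw [← hQ.fderivWithin_apply_one_one hK (hS hs).1 (hS hs).2]
  exact (hQ.hasFDerivWithinAt (hS hs).1 (hS hs).2).comp_hasDerivWithinAt s
    (((hasDerivWithinAt_id s S).const_add τ).prodMk ((hasDerivWithinAt_id s S).const_add ξ)) hS

theorem pdEta_zero (hQ : IsQSol K Φ T Qinit Q N) (hK : Continuous K) (hτ : τ ∈ Ico0 T) :
    pdEta Q τ 0 = 1 / N τ + K 0 := by
  have hpdTau : pdTau Q τ 0 = 0 := by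
    have hzero : (fun s => Q s 0) =ᶠ[𝓝[Ici 0] τ] fun _ => 0 := by
      filter_upwards [Ico0_mem_nhdsGE hτ] using hQ.bc
    rw [pdTau, hzero.derivWithin_eq (hQ.bc τ hτ), derivWithin_fun_const, Pi.zero_apply]
  have hpde := hQ.pdTau_add_pdEta hK hτ (left_mem_Icc.2 zero_le_one)
  rwa [hpdTau, zero_add, hQ.bc τ hτ] at hpde

theorem pdEta_one (hQ : IsQSol K Φ T Qinit Q N) (hτ : τ ∈ Ico0 T) :
    pdEta Q τ 1 = 1 / N τ + K Φ :=
  eq_add_of_sub_eq (hQ.Ndef τ hτ).symm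

theorem apply_one (hQ : IsQSol K Φ T Qinit Q N) (hK : ContDiff ℝ 1 K) (hτ : τ ∈ Ico0 T) :
    Q τ 1 = Φ := by
  have hone : (1 : ℝ) ∈ Icc (0 : ℝ) 1 := right_mem_Icc.2 zero_le_one
  have hderiv : ∀ s ∈ Icc 0 τ, HasDerivWithinAt (fun s => Q s 1) (K (Q s 1) - K Φ) (Ici 0) s :=
    fun s hs => by
      have hs' : s ∈ Ico0 T := Icc_subset_Ico0 hτ hs
      convert hQ.hasDerivWithinAt_fst hs' hone using 1
      rw [hQ.fderivWithin_apply_fst hs' hone]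
      linarith [hQ.pdTau_add_pdEta hK.continuous hs' hone, hQ.pdEta_one hs']
  have hinit : Q 0 1 = Φ := (hQ.init 1 hone).trans hQ.init1
  have hconst : EqOn (fun s => Q s 1) (fun _ => Q 0 1) (Icc 0 τ) := by
    refine eqOn_const_of_equilibrium (hK.sub contDiff_const) (sub_eq_zero.2 (congrArg K hinit))
      (fun s hs => ?_) (fun s hs => ?_)
    · exact (hderiv s hs).continuousWithinAt.mono Icc_subset_Ici_self
    · exact (hderiv s (Ico_subset_Icc_self hs)).mono (Ici_subset_Ici.2 hs.1)
  exact (hconst (right_mem_Icc.2 hτ.1)).trans hinit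

theorem isPhaseProfile (hQ : IsQSol K Φ T Qinit Q N) (hK : ContDiff ℝ 1 K) (hτ : τ ∈ Ico0 T) :
    IsPhaseProfile Φ (Q τ) where
  contDiffOn := hQ.contDiffOn_slice hτ
  monotoneOn := hQ.mono τ hτ
  map_zero := hQ.bc τ hτ
  map_one := hQ.apply_one hK hτ

theorem isPhaseProfile_init (hQ : IsQSol K Φ T Qinit Q N) : IsPhaseProfile Φ Qinit where
  contDiffOn := hQ.initReg
  monotoneOn := hQ.initMono
  map_zero := hQ.init0
  map_one := hQ.init1

-- `Q` is merely `C¹`; the mixed partial exists along characteristics because the right-hand side of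
-- the equation is differentiable in `η`.
theorem hasDerivWithinAt_pdEta_characteristic (hQ : IsQSol K Φ T Qinit Q N)
    (hK : ContDiff ℝ 1 K) {ξ h s : ℝ} (hτ : 0 ≤ τ) (hτh : τ + h ∈ Ico0 T) (hξ : 0 ≤ ξ)
    (hξh : ξ + h < 1) (hs : s ∈ Icc 0 h) :
    HasDerivWithinAt (fun s => pdEta Q (τ + s) (ξ + s)) (slopeGrowth K (Q (τ + s)) (ξ + s))
      (Icc 0 h) s := by
  have htime : ∀ r ∈ Icc 0 h, τ + r ∈ Ico0 T := fun r hr =>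
    Icc_subset_Ico0 hτh ⟨add_nonneg hτ hr.1, by linarith [hr.2]⟩
  have hspace : ∀ r ∈ Icc 0 h, MapsTo (· + r) (Icc ξ (1 - h)) (Icc 0 1) := fun r hr x hx =>
    ⟨add_nonneg (hξ.trans hx.1) hr.1, by linarith [hx.2, hr.2]⟩
  have hξ_mem : ξ ∈ Icc ξ (1 - h) := left_mem_Icc.2 (by linarith)
  have hslice : ∀ r ∈ Icc 0 h, ∀ x ∈ Icc ξ (1 - h), HasDerivWithinAt (fun x => Q (τ + r) (x + r))
      (pdEta Q (τ + r) (x + r)) (Icc ξ (1 - h)) x := fun r hr x hx => by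
    have := ((hQ.isPhaseProfile hK (htime r hr)).hasDerivWithinAt (hspace r hr hx)).comp x
      ((hasDerivWithinAt_id x _).add_const r) (hspace r hr)
    rwa [mul_one] at this
  have : (𝓝[Icc ξ (1 - h) \ {ξ}] ξ).NeBot := by
    rw [Icc_sdiff_left]
    exact left_nhdsWithin_Ioc_neBot (by linarith)
  refine hasDerivWithinAt_of_mixed_partial (u := fun r x => Q (τ + r) (x + r))
    (f := fun r x => 1 / N (τ + r) + K (Q (τ + r) (x + r)))
    (w := fun r x => slopeGrowth K (Q (τ + r)) (x + r)) (convex_Icc 0 h) (convex_Icc ξ (1 - h))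
    hs hξ_mem (fun x hx r hr => ?_) (fun r hr x hx => ?_) (fun r hr => hslice r hr ξ hξ_mem) ?_
  · exact hQ.hasDerivWithinAt_characteristic hK.continuous
      (fun r hr => ⟨htime r hr, hspace r hr hx⟩) hr
  · exact ((hK.differentiable one_ne_zero _).hasDerivAt.comp_hasDerivWithinAt x
      (hslice r hr x hx)).const_add _
  · exact (hQ.continuousOn_slopeGrowth hK).comp
      (f := fun z : ℝ × ℝ => (τ + z.1, z.2 + z.1)) (by fun_prop)
      (fun z hz => ⟨htime z.1 hz.1, hspace z.1 hz.1 hz.2⟩) _ ⟨hs, hξ_mem⟩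

variable {Qinit₁ Qinit₂ : ℝ → ℝ} {Q₁ Q₂ : ℝ → ℝ → ℝ} {N₁ N₂ : ℝ → ℝ} {t : ℝ}

theorem isPeriodicTransport_sub (hQ₁ : IsQSol K Φ T Qinit₁ Q₁ N₁)
    (hQ₂ : IsQSol K Φ T Qinit₂ Q₂ N₂) (hK : ContDiff ℝ 1 K) (ht : t ∈ Ico0 T) :
    IsPeriodicTransport t (fun τ η => pdEta Q₁ τ η - pdEta Q₂ τ η)
      (fun τ η => slopeGrowth K (Q₁ τ) η - slopeGrowth K (Q₂ τ) η) where
  continuousOn := (hQ₁.continuousOn_pdEta.sub hQ₂.continuousOn_pdEta).mono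
    (prod_mono_left (Icc_subset_Ico0 ht))
  continuousOn_source :=
    ((hQ₁.continuousOn_slopeGrowth hK).sub (hQ₂.continuousOn_slopeGrowth hK)).mono
      (prod_mono_left (Icc_subset_Ico0 ht))
  periodic τ hτ := by
    have hτ' := Icc_subset_Ico0 ht hτ
    rw [hQ₁.pdEta_zero hK.continuous hτ', hQ₂.pdEta_zero hK.continuous hτ', hQ₁.pdEta_one hτ',
      hQ₂.pdEta_one hτ', add_sub_add_right_eq_sub, add_sub_add_right_eq_sub]
  hasDerivWithinAt τ ξ h hτ hτh hξ hξh s hs := by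
    have hτh' : τ + h ∈ Ico0 T :=
      Icc_subset_Ico0 ht ⟨add_nonneg hτ (hs.1.trans hs.2), hτh⟩
    exact (hQ₁.hasDerivWithinAt_pdEta_characteristic hK hτ hτh' hξ hξh hs).sub
      (hQ₂.hasDerivWithinAt_pdEta_characteristic hK hτ hτh' hξ hξh hs)

theorem exp_kmin_mul_profileDist_le (hQ₁ : IsQSol K Φ T Qinit₁ Q₁ N₁)
    (hQ₂ : IsQSol K Φ T Qinit₂ Q₂ N₂) (hK : ContDiff ℝ 2 K) (ht : t ∈ Ico0 T) :
    exp (kmin K Φ * t) * profileDist Qinit₁ Qinit₂ ≤ profileDist (Q₁ t) (Q₂ t) := by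
  have hK₁ : ContDiff ℝ 1 K := hK.of_le one_le_two
  rw [← profileDist_congr hQ₁.init hQ₂.init]
  refine (hQ₁.isPeriodicTransport_sub hQ₂ hK₁ ht).exp_mul_integral_abs_le ht.1
    fun τ hτ h hh => ?_
  have hτ' := Icc_subset_Ico0 ht (Ico_subset_Icc_self hτ)
  exact (hQ₁.isPhaseProfile hK₁ hτ').mul_profileDist_le_integral_abs
    (hQ₂.isPhaseProfile hK₁ hτ') hK hh

end IsQSol

end Solutions

section SteadyStates

variable {K Qs : ℝ → ℝ} {Φ Ns : ℝ}

namespace IsSteadyState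

theorem hasDerivWithinAt (hss : IsSteadyState K Φ Qs Ns) {η : ℝ} (hη : η ∈ Icc (0 : ℝ) 1) :
    HasDerivWithinAt Qs (K (Qs η) + 1 / Ns) (Icc 0 1) η :=
  hss.2.2.1 η hη ▸ (hss.1.differentiableOn one_ne_zero η hη).hasDerivWithinAt

-- A zero of the slope would be an equilibrium of the ODE, hence would persist up to `η = 1`.
theorem slope_pos (hss : IsSteadyState K Φ Qs Ns) (hK : ContDiff ℝ 1 K) (hΦ : 0 ≤ K Φ) {η : ℝ}
    (hη : η ∈ Icc (0 : ℝ) 1) : 0 < K (Qs η) + 1 / Ns := by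
  have hone : 0 < K (Qs 1) + 1 / Ns := by
    rw [hss.2.2.2.2]
    exact add_pos_of_nonneg_of_pos hΦ (one_div_pos.2 hss.2.1)
  have hcont : ContinuousOn Qs (Icc η 1) := hss.1.continuousOn.mono (Icc_subset_Icc_left hη.1)
  by_contra! hnonpos
  obtain ⟨x, hx, hx0⟩ : (0 : ℝ) ∈ (fun x => K (Qs x) + 1 / Ns) '' Icc η 1 :=
    intermediate_value_Icc hη.2
      ((hK.continuous.comp_continuousOn hcont).add continuousOn_const) ⟨hnonpos, hone.le⟩
  have hright : ∀ y ∈ Ico x 1, HasDerivWithinAt Qs (K (Qs y) + 1 / Ns) (Ici y) y := fun y hy => by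
    have hy' : y ∈ Ico 0 1 := ⟨(hη.1.trans hx.1).trans hy.1, hy.2⟩
    exact (hss.hasDerivWithinAt (Ico_subset_Icc_self hy')).mono_of_mem_nhdsWithin
      (Icc_mem_nhdsGE_of_mem hy')
  have hconst : Qs 1 = Qs x := eqOn_const_of_equilibrium (hK.add contDiff_const) hx0
    (hcont.mono (Icc_subset_Icc_left hx.1)) hright (right_mem_Icc.2 hx.2)
  rw [hconst] at hone
  exact hone.ne' hx0

theorem monotoneOn (hss : IsSteadyState K Φ Qs Ns) (hK : ContDiff ℝ 1 K) (hΦ : 0 ≤ K Φ) :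
    MonotoneOn Qs (Icc 0 1) :=
  monotoneOn_of_hasDerivWithinAt_nonneg (convex_Icc 0 1) hss.1.continuousOn
    (fun _ hη => (hss.hasDerivWithinAt (interior_subset hη)).mono interior_subset)
    fun _ hη => (hss.slope_pos hK hΦ (interior_subset hη)).le

theorem isQSol (hss : IsSteadyState K Φ Qs Ns) (hK : ContDiff ℝ 1 K) (hΦ : 0 ≤ K Φ)
    (T : ℝ≥0∞) : IsQSol K Φ T Qs (fun _ => Qs) (fun _ => Ns) := by
  have hmono := hss.monotoneOn hK hΦ
  obtain ⟨hreg, hNs, hode, hzero, hone⟩ := hss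
  have hslope : derivWithin Qs (Icc 0 1) 1 = K Φ + 1 / Ns := by
    rw [hode 1 (right_mem_Icc.2 zero_le_one), hone]
  have hlt : K Φ < derivWithin Qs (Icc 0 1) 1 :=
    hslope ▸ lt_add_of_pos_right _ (one_div_pos.2 hNs)
  exact {
    initReg := hreg
    initMono := hmono
    init0 := hzero
    init1 := hone
    initDeriv := hlt
    reg := hreg.comp contDiff_snd.contDiffOn fun _ hz => hz.2
    mono := fun _ _ => hmono
    Ncont := continuousOn_const
    Npos := fun _ _ => hNs
    pde := fun τ _ η hη => by
      rw [pdTau, derivWithin_fun_const, Pi.zero_apply, zero_add, pdEta,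
        hode η (Ioo_subset_Icc_self hη), add_comm]
    bc := fun _ _ => hzero
    Ndef := fun _ _ => by rw [pdEta, hslope, add_sub_cancel_left]
    init := fun _ _ => rfl
    constraint := fun _ _ => hlt }

end IsSteadyState

end SteadyStates

theorem stmt17_general {K : ℝ → ℝ} {Φ : ℝ} (hK : ContDiff ℝ 2 K) (hkmin : 0 < kmin K Φ)
    {T : ℝ≥0∞} {Qinit₁ Qinit₂ : ℝ → ℝ} {Q₁ Q₂ : ℝ → ℝ → ℝ} {N₁ N₂ : ℝ → ℝ}
    (hQ₁ : IsQSol K Φ T Qinit₁ Q₁ N₁) (hQ₂ : IsQSol K Φ T Qinit₂ Q₂ N₂)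
    (hne : ¬ ∀ η ∈ Icc (0 : ℝ) 1, Qinit₁ η = Qinit₂ η) :
    T ≤ ENNReal.ofReal ((1 / kmin K Φ) * log (2 * Φ / profileDist Qinit₁ Qinit₂)) := by
  have hdist : 0 < profileDist Qinit₁ Qinit₂ := by
    push Not at hne
    obtain ⟨η, hη, hη_ne⟩ := hne
    exact (abs_sub_pos.2 hη_ne).trans_le
      (hQ₁.isPhaseProfile_init.abs_sub_le_profileDist hQ₂.isPhaseProfile_init hη)
  refine le_of_forall_lt_imp_le_of_dense fun s hs => ?_
  lift s to NNReal using ne_top_of_lt hs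
  have ht : (s : ℝ) ∈ Ico0 T := ⟨s.2, by rwa [ENNReal.ofReal_coe_nnreal]⟩
  have hK₁ : ContDiff ℝ 1 K := hK.of_le one_le_two
  have hexp : exp (kmin K Φ * s) ≤ 2 * Φ / profileDist Qinit₁ Qinit₂ :=
    (le_div_iff₀ hdist).2 <| (hQ₁.exp_kmin_mul_profileDist_le hQ₂ hK ht).trans
      ((hQ₁.isPhaseProfile hK₁ ht).profileDist_le_two_mul (hQ₂.isPhaseProfile hK₁ ht))
  rw [← ENNReal.ofReal_coe_nnreal]
  refine ENNReal.ofReal_le_ofReal ?_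
  rw [one_div, ← div_eq_inv_mul, le_div_iff₀' hkmin]
  exact (le_log_iff_exp_le ((exp_pos _).trans_le hexp)).2 hexp

/-- Corollary 6.3: explicit upper bound on the blow-up time when `k_min > 0` and the unique
steady state exists. -/
theorem stmt17 (ΦF : ℝ) (hΦF : 0 < ΦF) (K : ℝ → ℝ) (hK : KAssump K ΦF)
    (hkmin : 0 < kmin K ΦF)
    (hint : 1 < ∫ φ in (0 : ℝ)..ΦF, 1 / K φ)
    (Qs : ℝ → ℝ) (Ns : ℝ) (hss : IsSteadyState K ΦF Qs Ns)
    (Qinit : ℝ → ℝ) (hA2 : A2 K ΦF Qinit)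
    (hne : ¬ ∀ η ∈ Icc (0 : ℝ) 1, Qinit η = Qs η) :
    ∀ (T : ℝ≥0∞) (Q : ℝ → ℝ → ℝ) (N : ℝ → ℝ), IsQSol K ΦF T Qinit Q N →
      T ≤ ENNReal.ofReal ((1 / kmin K ΦF) *
        Real.log (2 * ΦF /
          ∫ η in (0 : ℝ)..1,
            |derivWithin Qinit (Icc 0 1) η - derivWithin Qs (Icc 0 1) η|)) := by
  intro T Q N hQ
  exact stmt17_general hK.smooth hkmin hQ (hss.isQSol (hK.smooth.of_le one_le_two)
    (hK.pos ΦF (right_mem_Icc.2 hΦF.le)).le T) hne
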